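/- For all integers a ≥ 1, c ≥ 1 and b ≥ 1, the spectral radius of G_1(a,b,c) is strictly greater than the spectral radius of G_2(a, b−1, c), i.e., ρ(G_1(a,b,c)) > ρ(G_2(a,b−1,c)). -/

import Mathlib

open SimpleGraph

/-- Adjacency matrix of a simple graph over ℝ. -/
noncomputable def adjMat {V : Type*} (G : SimpleGraph V) : Matrix V V ℝ :=
  Matrix.of fun i j => @ite ℝ (G.Adj i j) (Classical.propDecidable _) 1 0

/-- Spectral radius: the largest eigenvalue (supremum of the real spectrum)
of the adjacency matrix. -/
noncomputable def specRad {V : Type*} [Fintype V] [DecidableEq V]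
    (G : SimpleGraph V) : ℝ :=
  sSup (spectrum ℝ (adjMat G))

/-- `D` is a dominating set of `G`. -/
def IsDomSet {V : Type*} (G : SimpleGraph V) (D : Finset V) : Prop :=
  ∀ v ∉ D, ∃ u ∈ D, G.Adj u v

/-- The domination number of `G`. -/
noncomputable def domNum {V : Type*} [Fintype V] (G : SimpleGraph V) : ℕ :=
  sInf {k | ∃ D : Finset V, IsDomSet G D ∧ D.card = k}

/-- The tree `G₁(a,b,c)`: the path v1 v4 v5 v6 v3 (vertices `Sum.inl 0, …, Sum.inl 4`
in path order), the centre v2 (`Sum.inl 5`) of a star on `b+1` vertices joined to v5,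
with `a` pendant edges at v1 and `c` pendant edges at v3. -/
def G1graph (a b c : ℕ) : SimpleGraph (Fin 6 ⊕ (Fin a ⊕ Fin b ⊕ Fin c)) :=
  SimpleGraph.fromRel (fun x y =>
    (x = Sum.inl 0 ∧ y = Sum.inl 1) ∨
    (x = Sum.inl 1 ∧ y = Sum.inl 2) ∨
    (x = Sum.inl 2 ∧ y = Sum.inl 3) ∨
    (x = Sum.inl 3 ∧ y = Sum.inl 4) ∨
    (x = Sum.inl 2 ∧ y = Sum.inl 5) ∨
    (∃ j : Fin a, x = Sum.inl 0 ∧ y = Sum.inr (Sum.inl j)) ∨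
    (∃ j : Fin b, x = Sum.inl 5 ∧ y = Sum.inr (Sum.inr (Sum.inl j))) ∨
    (∃ j : Fin c, x = Sum.inl 4 ∧ y = Sum.inr (Sum.inr (Sum.inr j))))

/-- The tree `G₂(a,b,c)`: the path v1 v4 v5 v2 v6 v7 v3 (vertices `Sum.inl 0, …, Sum.inl 6`
in path order), with `a` pendant edges at v1, `b` pendant edges at v2 and `c` pendant
edges at v3. -/
def G2graph (a b c : ℕ) : SimpleGraph (Fin 7 ⊕ (Fin a ⊕ Fin b ⊕ Fin c)) :=
  SimpleGraph.fromRel (fun x y =>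
    (x = Sum.inl 0 ∧ y = Sum.inl 1) ∨
    (x = Sum.inl 1 ∧ y = Sum.inl 2) ∨
    (x = Sum.inl 2 ∧ y = Sum.inl 3) ∨
    (x = Sum.inl 3 ∧ y = Sum.inl 4) ∨
    (x = Sum.inl 4 ∧ y = Sum.inl 5) ∨
    (x = Sum.inl 5 ∧ y = Sum.inl 6) ∨
    (∃ j : Fin a, x = Sum.inl 0 ∧ y = Sum.inr (Sum.inl j)) ∨
    (∃ j : Fin b, x = Sum.inl 3 ∧ y = Sum.inr (Sum.inr (Sum.inl j))) ∨
    (∃ j : Fin c, x = Sum.inl 6 ∧ y = Sum.inr (Sum.inr (Sum.inr j))))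

/-!
In `G₂(a, b - 1, c)` the vertices `v5` and `v6` are the two neighbours of `v2` on the path. Moving
the edge `v6v7` to `v5v7` glues the two arms together at `v5` and turns `v6` into one more pendant
vertex at `v2`, so the result is `G₁(a, b, c)`. This is a Kelmans transformation: all private
neighbours of a vertex `q` are handed over to a vertex `p`. Such a transformation of a connected
graph increases the spectral radius as soon as both `p` and `q` have private neighbours. Indeed,
transforming from `p` to `q` instead yields an isomorphic graph, so one may assume `x q ≤ x p` for
the positive Perron vector `x`. Then the quadratic form of the adjacency matrix at `x` does not
decrease. If the spectral radius did not increase, `x` would also be an eigenvector of the new graph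
for its spectral radius, which is absurd because the entry of `A x` at `p` has grown.
-/

open Matrix

section QuadraticForm

variable {m n R : Type*} [Fintype m] [Fintype n] [CommRing R]

theorem dotProduct_smul_one_sub_mulVec [DecidableEq n] (A : Matrix n n R) (r : R) (x : n → R) :
    x ⬝ᵥ (r • (1 : Matrix n n R) - A) *ᵥ x = r * (x ⬝ᵥ x) - x ⬝ᵥ A *ᵥ x := by
  rw [sub_mulVec, smul_mulVec, one_mulVec, dotProduct_sub, dotProduct_smul, smul_eq_mul]

variable [LinearOrder R] [IsStrictOrderedRing R]

theorem dotProduct_mulVec_le_abs_dotProduct_mulVec_abs {A : Matrix m n R}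
    (hA : ∀ i j, 0 ≤ A i j) (x : m → R) (y : n → R) :
    x ⬝ᵥ A *ᵥ y ≤ |x| ⬝ᵥ A *ᵥ |y| := by
  simp only [dotProduct, mulVec, Finset.mul_sum, Pi.abs_apply]
  refine Finset.sum_le_sum fun i _ ↦ Finset.sum_le_sum fun j _ ↦ ?_
  calc x i * (A i j * y j) = A i j * (x i * y j) := by ring
    _ ≤ A i j * |x i * y j| := mul_le_mul_of_nonneg_left (le_abs_self _) (hA i j)
    _ = |x i| * (A i j * |y j|) := by rw [abs_mul]; ring

theorem indicator_one_dotProduct_pos {s : Set n} (hs : s.Nonempty) {x : n → R}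
    (hx : ∀ i, 0 < x i) : 0 < s.indicator 1 ⬝ᵥ x := by
  obtain ⟨i, hi⟩ := hs
  refine Finset.sum_pos' (fun j _ ↦ mul_nonneg (Set.indicator_nonneg (by simp) j) (hx j).le)
    ⟨i, Finset.mem_univ i, ?_⟩
  simpa [hi] using hx i

end QuadraticForm

section SymmetricMatrix

variable {n : Type*} [Fintype n] [DecidableEq n] {A : Matrix n n ℝ}

theorem posSemidef_sSup_spectrum_smul_one_sub (hA : A.IsHermitian) :
    (sSup (spectrum ℝ A) • (1 : Matrix n n ℝ) - A).PosSemidef := by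
  rw [posSemidef_iff_isHermitian_and_spectrum_nonneg]
  refine ⟨(isHermitian_one.smul (IsSelfAdjoint.all _)).sub hA, fun μ hμ ↦ ?_⟩
  rw [← Algebra.algebraMap_eq_smul_one, ← spectrum.singleton_sub_eq] at hμ
  obtain ⟨_, rfl, ν, hν, rfl⟩ := hμ
  exact sub_nonneg.2 (le_csSup finite_real_spectrum.bddAbove hν)

theorem dotProduct_mulVec_le_sSup_spectrum_mul (hA : A.IsHermitian) (x : n → ℝ) :
    x ⬝ᵥ A *ᵥ x ≤ sSup (spectrum ℝ A) * (x ⬝ᵥ x) := by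
  have h := (posSemidef_sSup_spectrum_smul_one_sub hA).dotProduct_mulVec_nonneg x
  rwa [star_trivial, dotProduct_smul_one_sub_mulVec, sub_nonneg] at h

theorem mulVec_eq_sSup_spectrum_smul_of_le (hA : A.IsHermitian) {x : n → ℝ}
    (hx : sSup (spectrum ℝ A) * (x ⬝ᵥ x) ≤ x ⬝ᵥ A *ᵥ x) :
    A *ᵥ x = sSup (spectrum ℝ A) • x := by
  have h := (posSemidef_sSup_spectrum_smul_one_sub hA).dotProduct_mulVec_zero_iff x
  rw [star_trivial, dotProduct_smul_one_sub_mulVec, sub_mulVec, smul_mulVec,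
    one_mulVec, sub_eq_zero, sub_eq_zero] at h
  exact (h.1 (hx.antisymm (dotProduct_mulVec_le_sSup_spectrum_mul hA x))).symm

theorem exists_mulVec_eq_sSup_spectrum_smul [Nonempty n] (hA : A.IsHermitian) :
    ∃ x : n → ℝ, x ≠ 0 ∧ A *ᵥ x = sSup (spectrum ℝ A) • x := by
  have hne : (spectrum ℝ A).Nonempty :=
    hA.spectrum_real_eq_range_eigenvalues ▸ Set.range_nonempty _
  have hmem := hne.csSup_mem finite_real_spectrum
  rw [← spectrum_toLin', ← Module.End.hasEigenvalue_iff_mem_spectrum] at hmem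
  obtain ⟨x, hx⟩ := hmem.exists_hasEigenvector
  exact ⟨x, hx.2, by simpa only [spectrum_toLin', toLin'_apply] using hx.apply_eq_smul⟩

theorem exists_nonneg_mulVec_eq_sSup_spectrum_smul [Nonempty n] (hA : A.IsHermitian)
    (hA₀ : ∀ i j, 0 ≤ A i j) :
    ∃ x : n → ℝ, x ≠ 0 ∧ 0 ≤ x ∧ A *ᵥ x = sSup (spectrum ℝ A) • x := by
  obtain ⟨x, hx₀, hx⟩ := exists_mulVec_eq_sSup_spectrum_smul hA
  refine ⟨|x|, fun h ↦ hx₀ (funext fun i ↦ abs_eq_zero.1 (congrFun h i)), abs_nonneg x,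
    mulVec_eq_sSup_spectrum_smul_of_le hA ?_⟩
  calc sSup (spectrum ℝ A) * (|x| ⬝ᵥ |x|) = sSup (spectrum ℝ A) * (x ⬝ᵥ x) := by
        simp only [dotProduct, Pi.abs_apply, abs_mul_abs_self]
    _ = x ⬝ᵥ A *ᵥ x := by rw [hx, dotProduct_smul, smul_eq_mul]
    _ ≤ |x| ⬝ᵥ A *ᵥ |x| := dotProduct_mulVec_le_abs_dotProduct_mulVec_abs hA₀ x x

end SymmetricMatrix

section PerronVector

variable {V W : Type*} {G : SimpleGraph V} {H : SimpleGraph W}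

theorem adjMat_eq_adjMatrix (G : SimpleGraph V) [DecidableRel G.Adj] :
    adjMat G = G.adjMatrix ℝ := by
  ext v w
  simp only [adjMat, of_apply, adjMatrix_apply]
  congr

theorem adjMat_nonneg (G : SimpleGraph V) (v w : V) : 0 ≤ adjMat G v w := by
  unfold adjMat
  rw [of_apply]
  positivity

theorem isHermitian_adjMat (G : SimpleGraph V) : (adjMat G).IsHermitian := by
  classical
  rw [adjMat_eq_adjMatrix]
  exact G.isSymm_adjMatrix

variable [Fintype V] [Fintype W]

theorem specRad_congr [DecidableEq V] [DecidableEq W] (e : G ≃g H) : specRad G = specRad H := by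
  classical
  rw [specRad, specRad, adjMat_eq_adjMatrix, adjMat_eq_adjMatrix, ← e.reindex_adjMatrix ℝ,
    ← coe_reindexAlgEquiv ℝ ℝ, AlgEquiv.spectrum_eq]

theorem eq_zero_of_adj_of_adjMat_mulVec_eq_smul {x : V → ℝ} {μ : ℝ} (hx : 0 ≤ x)
    (h : adjMat G *ᵥ x = μ • x) {v w : V} (hvw : G.Adj v w) (hv : x v = 0) : x w = 0 := by
  classical
  have hsum : ∑ u ∈ G.neighborFinset v, x u = 0 := by
    rw [← adjMatrix_mulVec_apply, ← adjMat_eq_adjMatrix, h, Pi.smul_apply, hv, smul_zero]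
  exact (Finset.sum_eq_zero_iff_of_nonneg fun u _ ↦ hx u).1 hsum w
    ((G.mem_neighborFinset v w).2 hvw)

theorem pos_of_adjMat_mulVec_eq_smul (hG : G.Preconnected) {x : V → ℝ} {μ : ℝ} (hx : 0 ≤ x)
    (hx₀ : x ≠ 0) (h : adjMat G *ᵥ x = μ • x) (v : V) : 0 < x v := by
  refine (hx v).lt_of_ne' fun hv ↦ hx₀ (funext fun w ↦ ?_)
  obtain ⟨p⟩ := hG v w
  induction p with
  | nil => exact hv
  | cons huv _ ih => exact ih (eq_zero_of_adj_of_adjMat_mulVec_eq_smul hx h huv hv)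

theorem exists_pos_adjMat_mulVec_eq_specRad_smul [DecidableEq V] (hG : G.Connected) :
    ∃ x : V → ℝ, (∀ v, 0 < x v) ∧ adjMat G *ᵥ x = specRad G • x := by
  have := hG.nonempty
  obtain ⟨x, hx₀, hx, h⟩ :=
    exists_nonneg_mulVec_eq_sSup_spectrum_smul (isHermitian_adjMat G) (adjMat_nonneg G)
  exact ⟨x, pos_of_adjMat_mulVec_eq_smul hG.preconnected hx hx₀ h, h⟩

end PerronVector

section Kelmans

variable {V : Type*} {G : SimpleGraph V} {p q : V}

/-- The private neighbours of `q` with respect to `p`, i.e. `N(q) \ N[p]`: the vertices that a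
Kelmans transformation from `q` to `p` moves. -/
def privateNeighborSet (G : SimpleGraph V) (q p : V) : Set V :=
  G.neighborSet q \ insert p (G.neighborSet p)

theorem mem_privateNeighborSet {w : V} :
    w ∈ privateNeighborSet G q p ↔ G.Adj q w ∧ w ≠ p ∧ ¬G.Adj p w := by
  simp [privateNeighborSet]

/-- The Kelmans transformation of `G` from `q` to `p`: every edge `qw` with `w` a private
neighbour of `q` with respect to `p` is replaced by `pw`. The vertex set stays the same. -/
def kelmans (G : SimpleGraph V) (p q : V) : SimpleGraph V where
  Adj u w :=
    (G.Adj u w ∧ ¬(u = q ∧ w ∈ privateNeighborSet G q p) ∧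
      ¬(w = q ∧ u ∈ privateNeighborSet G q p)) ∨
    (u = p ∧ w ∈ privateNeighborSet G q p) ∨ (w = p ∧ u ∈ privateNeighborSet G q p)
  symm := ⟨fun u w ↦ by grind [G.adj_comm u w]⟩
  loopless := ⟨fun u ↦ by simp only [mem_privateNeighborSet]; grind [G.irrefl]⟩

theorem kelmans_adj {u w : V} : (kelmans G p q).Adj u w ↔
    (G.Adj u w ∧ ¬(u = q ∧ w ∈ privateNeighborSet G q p) ∧
      ¬(w = q ∧ u ∈ privateNeighborSet G q p)) ∨
    (u = p ∧ w ∈ privateNeighborSet G q p) ∨ (w = p ∧ u ∈ privateNeighborSet G q p) := Iff.rfl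

/-- Kelmans transformations in opposite directions agree up to exchanging the two vertices. -/
def kelmansSwapIso [DecidableEq V] (G : SimpleGraph V) (p q : V) :
    kelmans G p q ≃g kelmans G q p where
  toEquiv := Equiv.swap p q
  map_rel_iff' {u w} := by
    simp only [kelmans_adj, mem_privateNeighborSet, Equiv.swap_apply_def]
    grind (splits := 20) [G.adj_comm, G.irrefl]

theorem adjMat_kelmans [DecidableEq V] (G : SimpleGraph V) (p q : V) :
    adjMat (kelmans G p q) = adjMat G +
      (vecMulVec (Pi.single p 1 - Pi.single q 1) ((privateNeighborSet G q p).indicator 1) +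
        vecMulVec ((privateNeighborSet G q p).indicator 1) (Pi.single p 1 - Pi.single q 1)) := by
  classical
  ext u w
  simp only [adjMat, of_apply, Matrix.add_apply, vecMulVec_apply, kelmans_adj, Set.indicator_apply,
    Pi.sub_apply, Pi.single_apply, mem_privateNeighborSet, Pi.one_apply]
  grind (splits := 20) [G.adj_comm, G.irrefl]

variable [Fintype V]

theorem adjMat_kelmans_mulVec [DecidableEq V] (G : SimpleGraph V) (p q : V) (x : V → ℝ) :
    adjMat (kelmans G p q) *ᵥ x = adjMat G *ᵥ x +
      (((privateNeighborSet G q p).indicator 1 ⬝ᵥ x) • (Pi.single p 1 - Pi.single q 1) +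
        (x p - x q) • (privateNeighborSet G q p).indicator 1) := by
  rw [adjMat_kelmans, add_mulVec, add_mulVec, vecMulVec_mulVec, vecMulVec_mulVec, sub_dotProduct,
    single_one_dotProduct, single_one_dotProduct, op_smul_eq_smul, op_smul_eq_smul]

theorem dotProduct_adjMat_kelmans_mulVec (G : SimpleGraph V) (p q : V) (x : V → ℝ) :
    x ⬝ᵥ adjMat (kelmans G p q) *ᵥ x = x ⬝ᵥ adjMat G *ᵥ x +
      2 * ((privateNeighborSet G q p).indicator 1 ⬝ᵥ x) * (x p - x q) := by
  classical
  rw [adjMat_kelmans_mulVec, dotProduct_add, dotProduct_add, dotProduct_smul, dotProduct_smul,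
    dotProduct_sub, dotProduct_single_one, dotProduct_single_one, smul_eq_mul, smul_eq_mul,
    dotProduct_comm x (Set.indicator _ 1)]
  ring

theorem adjMat_kelmans_mulVec_apply_self (hpq : p ≠ q) (x : V → ℝ) :
    (adjMat (kelmans G p q) *ᵥ x) p =
      (adjMat G *ᵥ x) p + (privateNeighborSet G q p).indicator 1 ⬝ᵥ x := by
  classical
  have hp : p ∉ privateNeighborSet G q p := fun h ↦ (mem_privateNeighborSet.1 h).2.1 rfl
  simp [adjMat_kelmans_mulVec, hp, hpq]

variable [DecidableEq V]

theorem specRad_lt_specRad_kelmans_of_le {x : V → ℝ} (hx : ∀ v, 0 < x v)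
    (hGx : adjMat G *ᵥ x = specRad G • x) (hqp : x q ≤ x p)
    (hM : (privateNeighborSet G q p).Nonempty) : specRad G < specRad (kelmans G p q) := by
  have hMx := indicator_one_dotProduct_pos hM hx
  have hpq : p ≠ q := by
    rintro rfl
    obtain ⟨w, hw⟩ := hM
    exact hw.2 (Or.inr hw.1)
  by_contra! hle
  have hquad : specRad (kelmans G p q) * (x ⬝ᵥ x) ≤ x ⬝ᵥ adjMat (kelmans G p q) *ᵥ x :=
    calc specRad (kelmans G p q) * (x ⬝ᵥ x) ≤ specRad G * (x ⬝ᵥ x) :=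
          mul_le_mul_of_nonneg_right hle (Finset.sum_nonneg fun v _ ↦ mul_self_nonneg (x v))
      _ = x ⬝ᵥ adjMat G *ᵥ x := by rw [hGx, dotProduct_smul, smul_eq_mul]
      _ ≤ x ⬝ᵥ adjMat (kelmans G p q) *ᵥ x := by
          rw [dotProduct_adjMat_kelmans_mulVec]
          exact le_add_of_nonneg_right (mul_nonneg (by positivity) (sub_nonneg.2 hqp))
  have heig := congrFun (mulVec_eq_sSup_spectrum_smul_of_le (isHermitian_adjMat _) hquad) p
  rw [adjMat_kelmans_mulVec_apply_self hpq, hGx] at heig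
  have hle_p := mul_le_mul_of_nonneg_right hle (hx p).le
  rw [Pi.smul_apply, Pi.smul_apply, smul_eq_mul, smul_eq_mul, ← specRad] at heig
  linarith

theorem specRad_lt_specRad_kelmans (hG : G.Connected) (hp : (privateNeighborSet G p q).Nonempty)
    (hq : (privateNeighborSet G q p).Nonempty) : specRad G < specRad (kelmans G p q) := by
  obtain ⟨x, hx, hGx⟩ := exists_pos_adjMat_mulVec_eq_specRad_smul hG
  rcases le_total (x q) (x p) with h | h
  · exact specRad_lt_specRad_kelmans_of_le hx hGx h hq
  · rw [specRad_congr (kelmansSwapIso G p q)]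
    exact specRad_lt_specRad_kelmans_of_le hx hGx h hp

end Kelmans

section Trees

variable (a b c : ℕ)

theorem connected_G2graph : (G2graph a b c).Connected := by
  have hpath (i : Fin 7) : (G2graph a b c).Reachable (.inl 0) (.inl i) := by
    induction i using Fin.induction with
    | zero => rfl
    | succ i ih =>
      have hadj : (G2graph a b c).Adj (.inl i.castSucc) (.inl i.succ) := by
        fin_cases i <;> simp [G2graph]
      exact ih.trans hadj.reachable
  refine (connected_iff_exists_forall_reachable _).2 ⟨.inl 0, ?_⟩
  rintro (i | j | j | j)
  · exact hpath i
  · exact (hpath 0).trans (Adj.reachable (by simp [G2graph]))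
  · exact (hpath 3).trans (Adj.reachable (by simp [G2graph]))
  · exact (hpath 6).trans (Adj.reachable (by simp [G2graph]))

theorem privateNeighborSet_G2graph :
    privateNeighborSet (G2graph a b c) (.inl 4) (.inl 2) = {.inl 5} := by
  ext (i | j | j | j)
  · fin_cases i <;> simp [mem_privateNeighborSet, G2graph]
  all_goals simp [mem_privateNeighborSet, G2graph]

/-- The bijection from the vertices of `G₁(a, b + 1, c)` to those of `G₂(a, b, c)` under which `G₁`
is a Kelmans transformation of `G₂`: it sends `v5` to `v5`, the first pendant vertex at `v2`
to `v6`, and `v6` to `v7`. -/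
def g1VertexEquivG2Vertex :
    Fin 6 ⊕ (Fin a ⊕ Fin (b + 1) ⊕ Fin c) ≃ Fin 7 ⊕ (Fin a ⊕ Fin b ⊕ Fin c) where
  toFun := Sum.elim ![.inl 0, .inl 1, .inl 2, .inl 5, .inl 6, .inl 3]
    (Sum.elim (fun j ↦ .inr (.inl j))
      (Sum.elim (Fin.cons (.inl 4) fun j ↦ .inr (.inr (.inl j))) fun j ↦ .inr (.inr (.inr j))))
  invFun := Sum.elim ![.inl 0, .inl 1, .inl 2, .inl 5, .inr (.inr (.inl 0)), .inl 3, .inl 4]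
    (Sum.elim (fun j ↦ .inr (.inl j))
      (Sum.elim (fun j ↦ .inr (.inr (.inl j.succ))) fun j ↦ .inr (.inr (.inr j))))
  left_inv := by
    rintro (i | j | j | j)
    · fin_cases i <;> rfl
    · rfl
    · cases j using Fin.cases <;> rfl
    · rfl
  right_inv := by
    rintro (i | j | j | j)
    · fin_cases i <;> rfl
    all_goals rfl

/-- `G₁(a, b + 1, c)` arises from `G₂(a, b, c)` by moving the edge `v6v7` to `v5v7`, which merges
the two arms at `v5` and turns `v6` into a pendant vertex at `v2`. -/
def g1IsoKelmansG2 :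
    G1graph a (b + 1) c ≃g kelmans (G2graph a b c) (.inl 2) (.inl 4) where
  toEquiv := g1VertexEquivG2Vertex a b c
  map_rel_iff' {u w} := by
    rw [kelmans_adj, privateNeighborSet_G2graph]
    rcases u with i | j | j | j <;> rcases w with i' | j' | j' | j' <;>
      try fin_cases i
    all_goals try fin_cases i'
    all_goals try cases j using Fin.cases
    all_goals try cases j' using Fin.cases
    all_goals simp [g1VertexEquivG2Vertex, G1graph, G2graph]

end Trees

theorem specRad_G1_gt_G2 (a b c : ℕ) (ha : 1 ≤ a) (hb : 1 ≤ b) (hc : 1 ≤ c) :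
    specRad (G2graph a (b - 1) c) < specRad (G1graph a b c) := by
  obtain ⟨b, rfl⟩ := Nat.exists_eq_add_of_le' hb
  rw [Nat.add_sub_cancel, specRad_congr (g1IsoKelmansG2 a b c)]
  refine specRad_lt_specRad_kelmans (connected_G2graph a b c) ⟨.inl 1, ?_⟩ ⟨.inl 5, ?_⟩ <;>
    simp [mem_privateNeighborSet, G2graph]
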